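/- Conversely, if a nonempty closed subset M of ℝ^ν has infinite reach (every point of ℝ^ν has a unique nearest point in M), then M is convex. -/

import Mathlib

open Filter Topology in
theorem motz_grow {E : Type*} [NormedAddCommGroup E] [InnerProductSpace ℝ E] [ProperSpace E]
    (M : Set E) (hclosed : IsClosed M)
    (hcheby : ∀ x : E, ∃! y : E, y ∈ M ∧ dist x y = Metric.infDist x M)
    (z p v : E) (hp : p ∈ M) (hzp : dist z p = Metric.infDist z M)
    (hv : 0 < inner ℝ v (z - p)) :
    ∀ᶠ ε in 𝓝[>] (0:ℝ), Metric.infDist z M < Metric.infDist (z + ε • v) M := by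
  have hv0 : v ≠ 0 := by
    rintro rfl
    simp at hv
  have hvn : 0 < ‖v‖ := norm_pos_iff.2 hv0
  have hR : 0 ≤ Metric.infDist z M := Metric.infDist_nonneg
  set K : Set E := {y | y ∈ M ∧ inner ℝ v (z - y) ≤ 0} with hK
  have hKc : IsClosed K := by
    have hc : Continuous fun y : E => inner ℝ v (z - y) := by fun_prop
    exact hclosed.inter (isClosed_le hc continuous_const)
  have hD : ∃ D, Metric.infDist z M < D ∧ ∀ y ∈ K, D ≤ dist z y := by
    rcases K.eq_empty_or_nonempty with h | h
    · exact ⟨Metric.infDist z M + 1, by linarith, by simp [h]⟩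
    · obtain ⟨k, hk, hkd⟩ := hKc.exists_infDist_eq_dist h z
      refine ⟨Metric.infDist z K, ?_, fun y hy => Metric.infDist_le_dist_of_mem hy⟩
      rw [hkd]
      refine lt_of_le_of_ne (Metric.infDist_le_dist_of_mem hk.1) fun he => ?_
      have := (hcheby z).unique ⟨hk.1, he.symm⟩ ⟨hp, hzp⟩
      subst this
      exact absurd hk.2 (not_le.2 hv)
  obtain ⟨D, hD1, hD2⟩ := hD
  have hcont : Tendsto (fun ε : ℝ => D - ε * ‖v‖) (𝓝[>] (0:ℝ)) (𝓝 D) := by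
    have : Continuous (fun ε : ℝ => D - ε * ‖v‖) := by fun_prop
    simpa using (this.tendsto 0).mono_left nhdsWithin_le_nhds
  filter_upwards [hcont.eventually (lt_mem_nhds hD1), self_mem_nhdsWithin] with ε h1 h2
  have hε : 0 < ε := h2
  obtain ⟨y, ⟨hy, hyd⟩, -⟩ := hcheby (z + ε • v)
  rw [← hyd]
  by_cases hyK : y ∈ K
  · have h3 := hD2 y hyK
    have h4 : dist z y ≤ dist z (z + ε • v) + dist (z + ε • v) y := dist_triangle _ _ _
    have h5 : dist z (z + ε • v) = ε * ‖v‖ := by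
      simp [norm_smul, abs_of_pos hε]
    linarith
  · have h3 : 0 < inner ℝ v (z - y) := by
      by_contra h
      exact hyK ⟨hy, not_lt.1 h⟩
    have h4 : Metric.infDist z M ≤ ‖z - y‖ := by
      rw [← dist_eq_norm]; exact Metric.infDist_le_dist_of_mem hy
    have h5 : ‖z + ε • v - y‖ ^ 2 = ‖z - y‖ ^ 2 + 2 * (ε * inner ℝ v (z - y)) + (ε * ‖v‖) ^ 2 := by
      have : z + ε • v - y = (z - y) + ε • v := by abel
      rw [this, norm_add_sq_real, inner_smul_right, norm_smul, Real.norm_of_nonneg hε.le,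
        real_inner_comm]
    rw [dist_eq_norm]
    refine lt_of_le_of_lt h4 (lt_of_pow_lt_pow_left₀ 2 (norm_nonneg _) ?_)
    rw [h5]
    have := mul_pos hε h3
    have := sq_nonneg (ε * ‖v‖)
    linarith

theorem motz_bdd {E : Type*} [NormedAddCommGroup E] [InnerProductSpace ℝ E]
    (M : Set E) (x a z : E) (ha : a ∈ M) (r C : ℝ) (hr : 0 < r) (hC : ‖a - x‖ ≤ C)
    (hz : ‖z - x‖ + r ≤ Metric.infDist z M) (h : 0 ≤ inner ℝ (z - x) (a - x)) :
    ‖z - x‖ ≤ C ^ 2 / (2 * r) := by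
  have h1 : Metric.infDist z M ≤ ‖z - a‖ := by
    rw [← dist_eq_norm]; exact Metric.infDist_le_dist_of_mem ha
  have h2 : ‖z - a‖ ^ 2 = ‖z - x‖ ^ 2 - 2 * inner ℝ (z - x) (a - x) + ‖a - x‖ ^ 2 := by
    rw [← norm_sub_sq_real]; congr 2; abel
  have h3 : (‖z - x‖ + r) ^ 2 ≤ ‖z - a‖ ^ 2 :=
    pow_le_pow_left₀ (by positivity) (hz.trans h1) 2
  have h4 : ‖a - x‖ ^ 2 ≤ C ^ 2 := pow_le_pow_left₀ (norm_nonneg _) hC 2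
  rw [le_div_iff₀ (by positivity)]
  nlinarith

open Filter Topology in
theorem motz_main {E : Type*} [NormedAddCommGroup E] [InnerProductSpace ℝ E] [ProperSpace E]
    (M : Set E) (hclosed : IsClosed M)
    (hcheby : ∀ x : E, ∃! y : E, y ∈ M ∧ dist x y = Metric.infDist x M) :
    Convex ℝ M := by
  intro a ha b hb s t hs ht hst
  by_contra hx
  set x := s • a + t • b with hxdef
  have hdx : 0 < Metric.infDist x M := (hclosed.notMem_iff_infDist_pos ⟨a, ha⟩).1 hx
  obtain ⟨r, hr, hrx⟩ := exists_between hdx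
  set S : Set E := {z | ‖z - x‖ + r ≤ Metric.infDist z M} with hS
  have hScl : IsClosed S :=
    isClosed_le (by fun_prop) (Metric.continuous_infDist_pt M)
  have hxS : x ∈ S := by simpa [hS] using hrx.le
  have hSb : S ⊆ Metric.closedBall x ((max ‖a - x‖ ‖b - x‖) ^ 2 / (2 * r)) := by
    intro z hz
    rw [mem_closedBall_iff_norm]
    have hsum : s * inner ℝ (z - x) (a - x) + t * inner ℝ (z - x) (b - x) = 0 := by
      rw [← inner_smul_right, ← inner_smul_right, ← inner_add_right]
      have : s • (a - x) + t • (b - x) = 0 := by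
        have : s • (a - x) + t • (b - x) = (s • a + t • b) - (s + t) • x := by module
        rw [this, hst, one_smul, ← hxdef, sub_self]
      rw [this, inner_zero_right]
    by_cases h : 0 ≤ inner ℝ (z - x) (a - x)
    · exact motz_bdd M x a z ha r _ hr (le_max_left _ _) hz h
    · by_cases h' : 0 ≤ inner ℝ (z - x) (b - x)
      · exact motz_bdd M x b z hb r _ hr (le_max_right _ _) hz h'
      · exfalso
        push Not at h h'
        rcases hs.eq_or_lt with h0 | h0
        · have : t = 1 := by linarith
          subst this; rw [← h0] at hsum; linarith
        · have := mul_neg_of_pos_of_neg h0 h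
          have := mul_nonpos_of_nonneg_of_nonpos ht h'.le
          linarith
  have hSc : IsCompact S := (isCompact_closedBall _ _).of_isClosed_subset hScl hSb
  obtain ⟨z, hzS, hzmax⟩ := hSc.exists_isMaxOn ⟨x, hxS⟩
    (Metric.continuous_infDist_pt M).continuousOn
  obtain ⟨p, ⟨hp, hzp⟩, -⟩ := hcheby z
  have hzS' : ‖z - x‖ + r ≤ Metric.infDist z M := hzS
  set R := Metric.infDist z M with hRdef
  have hRpos : 0 < R := by have := norm_nonneg (z - x); linarith
  have hzpn : ‖z - p‖ = R := by rw [← dist_eq_norm, hzp]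
  -- suffices: a direction
  suffices h : ∃ v : E, 0 < inner ℝ v (z - p) ∧
      ∀ᶠ ε in 𝓝[>] (0:ℝ), ‖z + ε • v - x‖ + r ≤ R by
    obtain ⟨v, hv1, hv2⟩ := h
    obtain ⟨ε, h1, h2⟩ := (hv2.and (motz_grow M hclosed hcheby z p v hp hzp hv1)).exists
    have : z + ε • v ∈ S := h1.trans h2.le
    exact absurd (hzmax this) (not_le.2 h2)
  rcases hzS'.lt_or_eq with hlt | heq
  · refine ⟨z - p, ?_, ?_⟩
    · rw [real_inner_self_eq_norm_sq, hzpn]; positivity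
    · have hc : Continuous (fun ε : ℝ => ‖z + ε • (z - p) - x‖ + r) := by fun_prop
      have ht : Tendsto (fun ε : ℝ => ‖z + ε • (z - p) - x‖ + r) (𝓝[>] (0:ℝ))
          (𝓝 (‖z - x‖ + r)) := by
        simpa using (hc.tendsto 0).mono_left nhdsWithin_le_nhds
      exact (ht.eventually (gt_mem_nhds hlt)).mono fun _ h => le_of_lt h
  · have hzx : 0 < ‖z - x‖ := by
      rw [norm_pos_iff, sub_ne_zero]
      rintro rfl
      simp at heq
      linarith
    set l := ‖z - x‖ with hl
    -- v = l (z-p) - R (z-x)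
    have hcs : inner ℝ (z - x) (z - p) < l * R := by
      refine lt_of_le_of_ne ?_ ?_
      · rw [← hzpn]; exact real_inner_le_norm _ _
      · intro he
        have h1 : ‖x - p‖ ^ 2 = r ^ 2 := by
          have : x - p = (z - p) - (z - x) := by abel
          rw [this, norm_sub_sq_real, real_inner_comm, he, hzpn, ← hl, ← heq]; ring
        have h2 : Metric.infDist x M ≤ ‖x - p‖ := by
          rw [← dist_eq_norm]; exact Metric.infDist_le_dist_of_mem hp
        have h3 : r ^ 2 < ‖x - p‖ ^ 2 := pow_lt_pow_left₀ (hrx.trans_le h2) hr.le (by norm_num)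
        linarith
    set v := l • (z - p) - R • (z - x) with hv
    have hv1 : 0 < inner ℝ v (z - p) := by
      rw [hv, inner_sub_left, real_inner_smul_left, real_inner_smul_left,
        real_inner_self_eq_norm_sq, hzpn]
      nlinarith
    have hv2 : inner ℝ (z - x) v < 0 := by
      rw [hv, inner_sub_right, real_inner_smul_right, real_inner_smul_right,
        real_inner_self_eq_norm_sq, ← hl]
      nlinarith
    refine ⟨v, hv1, ?_⟩
    have hc : Continuous (fun ε : ℝ => 2 * inner ℝ (z - x) v + ε * ‖v‖ ^ 2) := by fun_prop
    have ht : Tendsto (fun ε : ℝ => 2 * inner ℝ (z - x) v + ε * ‖v‖ ^ 2) (𝓝[>] (0:ℝ))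
        (𝓝 (2 * inner ℝ (z - x) v)) := by
      simpa using (hc.tendsto 0).mono_left nhdsWithin_le_nhds
    filter_upwards [ht.eventually (gt_mem_nhds (by linarith : 2 * inner ℝ (z - x) v < 0)),
      self_mem_nhdsWithin] with ε h1 h2
    have hε : 0 < ε := h2
    have h3 : ‖z + ε • v - x‖ ^ 2 ≤ l ^ 2 := by
      have : z + ε • v - x = (z - x) + ε • v := by abel
      rw [this, norm_add_sq_real, real_inner_smul_right, norm_smul, Real.norm_of_nonneg hε.le,
        ← hl]
      have := mul_neg_of_pos_of_neg hε h1
      nlinarith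
    have h4 : ‖z + ε • v - x‖ ≤ l := (sq_le_sq₀ (norm_nonneg _) hzx.le).1 h3
    linarith

/-- Motzkin's theorem: if a nonempty closed subset `M` of `ℝ^ν` has infinite reach
(every point of `ℝ^ν` has a unique nearest point in `M`), then `M` is convex. -/
theorem stmt_7 (ν : ℕ) (M : Set (EuclideanSpace ℝ (Fin ν)))
    (hne : M.Nonempty) (hclosed : IsClosed M)
    (hcheby : ∀ x : EuclideanSpace ℝ (Fin ν),
      ∃! y : EuclideanSpace ℝ (Fin ν), y ∈ M ∧ dist x y = Metric.infDist x M) :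
    Convex ℝ M := by
  exact motz_main M hclosed hcheby
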